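/- Let G be a 1-walk regular graph on n vertices with adjacency matrix A. Let M, N be nonzero positive semidefinite matrices with M ∘ A = 0 and N ∘ (J − I − A) = 0. Then n ≥ (tr JM)(tr JN)/((tr M)(tr N)). -/

import Mathlib

open Matrix
open scoped ComplexOrder

/-!
Write `A` for the adjacency matrix and `J` for the all-ones matrix. By 1-walk regularity every
matrix in the algebra `𝕜[A]` is constant on the diagonal and constant on the edges. Hence, for `N`
supported on the diagonal and the edges, the trace-orthogonal projection `P` of `N` onto
`span {1, A}` satisfies `tr (X P) = tr (X N)` for all `X` in `𝕜[A]`, and also for `X = J`. As `P`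
lies in `𝕜[A]`, whose cone of positive semidefinite matrices is self-dual, `P` inherits positive
semidefiniteness from `N`. Since `A J = d J`, also `P J = c J`, with `c = tr (J N) / n`, so
`P - (c / n) J` is positive semidefinite. Pairing it with `M` gives the bound, because
`tr (M P) = tr M tr N / n`.
-/

lemma cfc_mem_adjoin_of_finite_spectrum {R A : Type*} {p : A → Prop} [Field R] [StarRing R]
    [MetricSpace R] [IsTopologicalRing R] [ContinuousStar R] [TopologicalSpace A] [Ring A]
    [StarRing A] [Algebra R A] [ContinuousFunctionalCalculus R A p] {a : A} (ha : p a)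
    (hfin : (spectrum R a).Finite) (f : R → R) : cfc f a ∈ Algebra.adjoin R {a} := by
  classical
  let q := Lagrange.interpolate hfin.toFinset id f
  have hq : (spectrum R a).EqOn f q.eval := fun x hx =>
    (Lagrange.eval_interpolate_at_node f Function.injective_id.injOn
      (hfin.mem_toFinset.mpr hx)).symm
  rw [cfc_congr hq, cfc_polynomial q a]
  exact Polynomial.aeval_mem_adjoin_singleton R a

section PosSemidef

variable {𝕜 V : Type*} [RCLike 𝕜] [Fintype V]

lemma trace_pos_of_posSemidef_of_ne_zero {P : Matrix V V 𝕜} (hP : P.PosSemidef) (hP0 : P ≠ 0) :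
    0 < P.trace :=
  hP.trace_nonneg.lt_of_ne' (hP.trace_eq_zero_iff.not.mpr hP0)

open scoped MatrixOrder in
lemma trace_mul_nonneg_of_posSemidef {P Q : Matrix V V 𝕜} (hP : P.PosSemidef)
    (hQ : Q.PosSemidef) : 0 ≤ (P * Q).trace := by
  classical
  obtain ⟨B, rfl⟩ := CStarAlgebra.nonneg_iff_eq_star_mul_self.mp hP.nonneg
  rw [Matrix.mul_assoc, trace_mul_comm]
  exact (hQ.mul_mul_conjTranspose_same B).trace_nonneg

lemma posSemidef_sub_smul_of_isStarProjection {P E : Matrix V V 𝕜} {c : 𝕜} (hP : P.PosSemidef)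
    (hE : IsStarProjection E) (hPE : P * E = c • E) : (P - c • E).PosSemidef := by
  classical
  have hEP : E * P = star c • E := by
    simpa only [conjTranspose_mul, conjTranspose_smul, hP.isHermitian.eq,
      hE.isSelfAdjoint.isHermitian.eq] using congrArg conjTranspose hPE
  have compress : (1 - E) * P * (1 - E)ᴴ = P - c • E := by
    simp only [conjTranspose_sub, conjTranspose_one, hE.isSelfAdjoint.isHermitian.eq, sub_mul,
      mul_sub, one_mul, mul_one, smul_mul_assoc, hEP, hPE, hE.isIdempotentElem.eq]
    abel
  exact compress ▸ hP.mul_mul_conjTranspose_same (1 - E)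

variable [DecidableEq V]

open scoped MatrixOrder in
lemma posSemidef_of_mem_of_forall_trace_mul_nonneg {S : Subalgebra ℝ (Matrix V V 𝕜)}
    {X : Matrix V V 𝕜} (hX : X.IsHermitian) (hXS : X ∈ S)
    (h : ∀ Y ∈ S, Y.PosSemidef → 0 ≤ (Y * X).trace) : X.PosSemidef := by
  have hself : IsSelfAdjoint X := hX.isSelfAdjoint
  have hnegS : X⁻ ∈ S := by
    rw [CFC.negPart_def, cfcₙ_eq_cfc]
    exact Algebra.adjoin_le (Set.singleton_subset_iff.mpr hXS)
      (cfc_mem_adjoin_of_finite_spectrum hself X.finite_real_spectrum _)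
  have hneg : (X⁻).PosSemidef := (CFC.negPart_nonneg X).posSemidef
  have hmul : X⁻ * X = -((X⁻)ᴴ * X⁻) := by
    nth_rw 2 [← CFC.posPart_sub_negPart X]
    rw [mul_sub, CFC.negPart_mul_posPart, zero_sub, hneg.isHermitian.eq]
  have htrace : ((X⁻)ᴴ * X⁻).trace = 0 := by
    refine le_antisymm ?_ (posSemidef_conjTranspose_mul_self _).trace_nonneg
    simpa only [hmul, trace_neg, Left.nonneg_neg_iff] using h _ hnegS hneg
  exact ((CFC.negPart_eq_zero_iff X).mp
    (trace_conjTranspose_mul_self_eq_zero_iff.mp htrace)).posSemidef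

end PosSemidef

/-- The all-ones matrix, usually written `J`. -/
abbrev allOnes (V α : Type*) [One α] : Matrix V V α := Matrix.of fun _ _ => 1

lemma trace_allOnes (V α : Type*) [Fintype V] [Semiring α] :
    (allOnes V α).trace = Fintype.card V := by
  simp [trace]

lemma isStarProjection_inv_card_smul_allOnes (V 𝕜 : Type*) [Fintype V] [RCLike 𝕜] :
    IsStarProjection ((Fintype.card V : 𝕜)⁻¹ • allOnes V 𝕜) where
  isIdempotentElem := by
    ext
    simpa [Matrix.mul_apply, mul_assoc, mul_left_comm] using
      mul_inv_mul_cancel (Fintype.card V : 𝕜)⁻¹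
  isSelfAdjoint := by
    ext
    simp

section HadamardTrace

variable {V α : Type*} [Fintype V] [CommSemiring α]

lemma trace_mul_hadamard (X Y Z : Matrix V V α) :
    (X * (Y ⊙ Z)).trace = ((X ⊙ Zᵀ) * Y).trace := by
  simp only [trace, diag_apply, Matrix.mul_apply, hadamard_apply, transpose_apply]
  exact Finset.sum_congr rfl fun i _ => Finset.sum_congr rfl fun j _ => by ring

lemma trace_mul_eq_zero_of_hadamard_transpose_eq_zero {X Y : Matrix V V α} (h : X ⊙ Yᵀ = 0) :
    (X * Y).trace = 0 := by
  rw [← transpose_transpose Y, ← sum_hadamard_eq, h]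
  simp

end HadamardTrace

lemma isHermitian_adjMatrix {V : Type*} (α : Type*) [Semiring α] [StarRing α] (G : SimpleGraph V)
    [DecidableRel G.Adj] : (G.adjMatrix α).IsHermitian := by
  ext i j
  simp [G.adj_comm i j, apply_ite star]

section ConstOnDiagAndEdges

variable {V : Type*} [DecidableEq V] (G : SimpleGraph V) [DecidableRel G.Adj]

/-- The matrices that are constant on the diagonal and constant on the edges of `G`. -/
def constOnDiagAndEdges (α : Type*) [CommSemiring α] : Submodule α (Matrix V V α) where
  carrier := {X | ∃ a b : α, X ⊙ 1 = a • (1 : Matrix V V α) ∧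
    X ⊙ G.adjMatrix α = b • G.adjMatrix α}
  zero_mem' := ⟨0, 0, by simp only [zero_hadamard, zero_smul, and_self]⟩
  add_mem' := by
    rintro X Y ⟨a, b, hX, hX'⟩ ⟨a', b', hY, hY'⟩
    exact ⟨a + a', b + b', by simp only [add_hadamard, add_smul, hX, hX', hY, hY', and_self]⟩
  smul_mem' := by
    rintro c X ⟨a, b, hX, hX'⟩
    exact ⟨c * a, c * b, by simp only [smul_hadamard, hX, hX', smul_smul, and_self]⟩

lemma one_mem_constOnDiagAndEdges (α : Type*) [CommSemiring α] :
    1 ∈ constOnDiagAndEdges G α :=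
  ⟨1, 0, by simp [one_hadamard]⟩

lemma allOnes_mem_constOnDiagAndEdges (α : Type*) [CommSemiring α] :
    allOnes V α ∈ constOnDiagAndEdges G α :=
  ⟨1, 1, (of_one_hadamard 1).trans (one_smul α 1).symm,
    (of_one_hadamard (G.adjMatrix α)).trans (one_smul α (G.adjMatrix α)).symm⟩

variable {G}

lemma hadamard_one_add_hadamard_adjMatrix {α : Type*} [CommRing α] {N : Matrix V V α}
    (hN : N ⊙ (allOnes V α - 1 - G.adjMatrix α) = 0) : N ⊙ 1 + N ⊙ G.adjMatrix α = N := by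
  have hsplit : (allOnes V α - 1 - G.adjMatrix α) + (1 + G.adjMatrix α) = allOnes V α := by abel
  calc N ⊙ 1 + N ⊙ G.adjMatrix α
      = N ⊙ ((allOnes V α - 1 - G.adjMatrix α) + (1 + G.adjMatrix α)) := by
        rw [hadamard_add, hN, zero_add, hadamard_add]
    _ = N := by rw [hsplit]; exact hadamard_of_one N

lemma trace_mul_of_hadamard_eq_smul {α : Type*} [CommRing α] [Fintype V] {X N : Matrix V V α}
    {a b : α} (ha : X ⊙ 1 = a • (1 : Matrix V V α)) (hb : X ⊙ G.adjMatrix α = b • G.adjMatrix α)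
    (hN : N ⊙ (allOnes V α - 1 - G.adjMatrix α) = 0) :
    (X * N).trace = a * N.trace + b * (G.adjMatrix α * N).trace := by
  calc (X * N).trace = (X * (N ⊙ 1)).trace + (X * (N ⊙ G.adjMatrix α)).trace := by
        rw [← trace_add, ← mul_add, hadamard_one_add_hadamard_adjMatrix hN]
    _ = a * N.trace + b * (G.adjMatrix α * N).trace := by
        rw [trace_mul_hadamard, trace_mul_hadamard, transpose_one, G.transpose_adjMatrix, ha, hb,
          smul_mul_assoc, smul_mul_assoc, one_mul, trace_smul, trace_smul, smul_eq_mul, smul_eq_mul]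

end ConstOnDiagAndEdges

section OneWalkRegular

variable {V : Type*} [Fintype V] [DecidableEq V] {G : SimpleGraph V} [DecidableRel G.Adj]

/-- A graph is 1-walk regular over `α` if the number of closed walks of length `k` at a vertex and
the number of walks of length `k` between adjacent vertices depend only on `k`, as elements
of `α`. -/
def IsOneWalkRegular (G : SimpleGraph V) [DecidableRel G.Adj] (α : Type*) [CommSemiring α] : Prop :=
  ∀ k : ℕ, 0 < k → ∃ a b : α,
    (G.adjMatrix α ^ k) ⊙ 1 = a • (1 : Matrix V V α) ∧
    (G.adjMatrix α ^ k) ⊙ G.adjMatrix α = b • G.adjMatrix α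

namespace IsOneWalkRegular

variable {α : Type*} [CommSemiring α]

lemma adjoin_le_constOnDiagAndEdges (hG : IsOneWalkRegular G α) :
    Subalgebra.toSubmodule (Algebra.adjoin α {G.adjMatrix α}) ≤ constOnDiagAndEdges G α := by
  rw [Algebra.adjoin_eq_span, Submodule.span_le]
  intro X hX
  obtain ⟨k, rfl⟩ := Submonoid.mem_closure_singleton.mp hX
  rcases k.eq_zero_or_pos with rfl | hk
  · simpa only [pow_zero] using! one_mem_constOnDiagAndEdges G α
  · exact hG k hk

lemma exists_adjMatrix_mul_allOnes (hG : IsOneWalkRegular G α) :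
    ∃ d : α, G.adjMatrix α * allOnes V α = d • allOnes V α := by
  obtain ⟨d, -, hd, -⟩ := hG 2 two_pos
  have hdegree (i : V) : (G.degree i : α) = d := by
    simpa only [pow_two, hadamard_apply, G.adjMatrix_mul_self_apply_self, one_apply_eq, mul_one,
      Matrix.smul_apply, smul_eq_mul] using congrFun₂ hd i i
  exact ⟨d, by ext i j; simp [hdegree]⟩

end IsOneWalkRegular

/-- The orthogonal projection of `N` onto the span of the identity and the adjacency matrix of `G`,
for the trace inner product. For a graph without edges the coefficient of the adjacency matrix is
`0 / 0 = 0`. -/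
noncomputable def adjProjection {α : Type*} [Field α] (G : SimpleGraph V) [DecidableRel G.Adj]
    (N : Matrix V V α) : Matrix V V α :=
  (N.trace / Fintype.card V) • 1 +
    ((G.adjMatrix α * N).trace / (G.adjMatrix α * G.adjMatrix α).trace) • G.adjMatrix α

section AdjProjection

variable {α : Type*} [Field α]

lemma adjProjection_mem_adjoin (N : Matrix V V α) :
    adjProjection G N ∈ Algebra.adjoin α {G.adjMatrix α} :=
  add_mem (Subalgebra.smul_mem _ (one_mem _) _)
    (Subalgebra.smul_mem _ (Algebra.self_mem_adjoin_singleton α _) _)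

lemma trace_mul_adjProjection (M N : Matrix V V α) :
    (M * adjProjection G N).trace = N.trace / Fintype.card V * M.trace +
      (G.adjMatrix α * N).trace / (G.adjMatrix α * G.adjMatrix α).trace *
        (M * G.adjMatrix α).trace := by
  rw [adjProjection, mul_add, mul_smul_comm, mul_smul_comm, mul_one, trace_add, trace_smul,
    trace_smul, smul_eq_mul, smul_eq_mul]

end AdjProjection

variable {𝕜 : Type*} [RCLike 𝕜] {M N : Matrix V V 𝕜}

lemma isHermitian_adjProjection (hN : N.IsHermitian) : (adjProjection G N).IsHermitian := by
  have hA := isHermitian_adjMatrix 𝕜 G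
  have htrace {X Y : Matrix V V 𝕜} (hX : X.IsHermitian) (hY : Y.IsHermitian) :
      IsSelfAdjoint (X * Y).trace := by
    rw [isSelfAdjoint_iff, ← trace_conjTranspose, conjTranspose_mul, hX.eq, hY.eq, trace_mul_comm]
  have htraceN : IsSelfAdjoint N.trace := by
    rw [isSelfAdjoint_iff, ← trace_conjTranspose, hN.eq]
  exact ((htraceN.div (.natCast _)).smul (.one _)).add
    (((htrace hA hN).div (htrace hA hA)).smul hA.isSelfAdjoint)

lemma trace_mul_adjProjection_of_mem_constOnDiagAndEdges {X : Matrix V V 𝕜}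
    (hX : X ∈ constOnDiagAndEdges G 𝕜)
    (hN : N ⊙ (allOnes V 𝕜 - 1 - G.adjMatrix 𝕜) = 0) :
    (X * adjProjection G N).trace = (X * N).trace := by
  obtain ⟨a, b, ha, hb⟩ := hX
  have htraceX : X.trace = a * Fintype.card V := by
    simpa only [hadamard_one, trace_diagonal, trace_smul, trace_one] using! congrArg trace ha
  have htraceXA : (X * G.adjMatrix 𝕜).trace = b * (G.adjMatrix 𝕜 * G.adjMatrix 𝕜).trace := by
    nth_rw 1 [← (G.isAdjMatrix_adjMatrix 𝕜).hadamard_self]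
    rw [trace_mul_hadamard, G.transpose_adjMatrix, hb, smul_mul_assoc, trace_smul, smul_eq_mul]
  have hempty (h : (Fintype.card V : 𝕜) = 0) : N.trace = 0 :=
    have := Fintype.card_eq_zero_iff.mp (Nat.cast_eq_zero.mp h)
    trace_eq_zero_of_isEmpty N
  have hedgeless : (G.adjMatrix 𝕜 * G.adjMatrix 𝕜).trace = 0 → (G.adjMatrix 𝕜 * N).trace = 0 := by
    intro h
    have hA : G.adjMatrix 𝕜 = 0 := trace_conjTranspose_mul_self_eq_zero_iff.mp <| by
      rwa [(isHermitian_adjMatrix 𝕜 G).eq]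
    rw [hA, zero_mul, trace_zero]
  rw [trace_mul_adjProjection, trace_mul_of_hadamard_eq_smul ha hb hN, htraceX, htraceXA,
    mul_left_comm, div_mul_cancel_of_imp hempty, mul_left_comm, div_mul_cancel_of_imp hedgeless]

namespace IsOneWalkRegular

lemma posSemidef_adjProjection (hG : IsOneWalkRegular G 𝕜) (hN : N.PosSemidef)
    (hNA : N ⊙ (allOnes V 𝕜 - 1 - G.adjMatrix 𝕜) = 0) : (adjProjection G N).PosSemidef := by
  refine posSemidef_of_mem_of_forall_trace_mul_nonneg
    (S := (Algebra.adjoin 𝕜 {G.adjMatrix 𝕜}).restrictScalars ℝ)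
    (isHermitian_adjProjection hN.isHermitian) (adjProjection_mem_adjoin N) fun Y hYS hY => ?_
  rw [trace_mul_adjProjection_of_mem_constOnDiagAndEdges (hG.adjoin_le_constOnDiagAndEdges hYS) hNA]
  exact trace_mul_nonneg_of_posSemidef hY hN

lemma adjProjection_mul_allOnes (hG : IsOneWalkRegular G 𝕜)
    (hN : N ⊙ (allOnes V 𝕜 - 1 - G.adjMatrix 𝕜) = 0) :
    adjProjection G N * allOnes V 𝕜 =
      ((allOnes V 𝕜 * N).trace / Fintype.card V) • allOnes V 𝕜 := by
  cases isEmpty_or_nonempty V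
  · exact Subsingleton.elim _ _
  obtain ⟨c, hc⟩ : ∃ c : 𝕜, adjProjection G N * allOnes V 𝕜 = c • allOnes V 𝕜 := by
    obtain ⟨d, hd⟩ := hG.exists_adjMatrix_mul_allOnes
    exact ⟨_, by rw [adjProjection, add_mul, smul_mul_assoc, smul_mul_assoc, one_mul, hd, smul_smul,
      ← add_smul]⟩
  have htrace : (allOnes V 𝕜 * N).trace = c * Fintype.card V := by
    rw [← trace_mul_adjProjection_of_mem_constOnDiagAndEdges
      (allOnes_mem_constOnDiagAndEdges G 𝕜) hN, trace_mul_comm, hc, trace_smul, trace_allOnes,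
      smul_eq_mul]
  rw [hc, htrace, mul_div_cancel_right₀ _ (Nat.cast_ne_zero.mpr Fintype.card_ne_zero)]

lemma trace_allOnes_mul_mul_trace_allOnes_mul_le (hG : IsOneWalkRegular G 𝕜)
    (hM : M.PosSemidef) (hN : N.PosSemidef) (hMA : M ⊙ G.adjMatrix 𝕜 = 0)
    (hNA : N ⊙ (allOnes V 𝕜 - 1 - G.adjMatrix 𝕜) = 0) :
    (allOnes V 𝕜 * M).trace * (allOnes V 𝕜 * N).trace ≤
      Fintype.card V * (M.trace * N.trace) := by
  cases isEmpty_or_nonempty V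
  · simp
  set n : 𝕜 := (Fintype.card V : 𝕜)
  set c := (allOnes V 𝕜 * N).trace / n with hc
  set E := n⁻¹ • allOnes V 𝕜 with hE
  have hPE : adjProjection G N * E = c • E := by
    rw [hE, mul_smul_comm, hG.adjProjection_mul_allOnes hNA, smul_comm]
  have hpsd : (adjProjection G N - c • E).PosSemidef :=
    posSemidef_sub_smul_of_isStarProjection (hG.posSemidef_adjProjection hN hNA)
      (isStarProjection_inv_card_smul_allOnes V 𝕜) hPE
  have hMA_trace : (M * G.adjMatrix 𝕜).trace = 0 :=
    trace_mul_eq_zero_of_hadamard_transpose_eq_zero (by rwa [G.transpose_adjMatrix])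
  have hpair : 0 ≤ N.trace / n * M.trace - c * (n⁻¹ * (allOnes V 𝕜 * M).trace) := by
    have := trace_mul_nonneg_of_posSemidef hM hpsd
    rwa [mul_sub, trace_sub, trace_mul_adjProjection, hMA_trace, mul_zero, add_zero, hE,
      mul_smul_comm, mul_smul_comm, trace_smul, trace_smul, trace_mul_comm M (allOnes V 𝕜)] at this
  have hn0 : n ≠ 0 := Nat.cast_ne_zero.mpr Fintype.card_ne_zero
  have hn2 : 0 ≤ n ^ 2 := pow_nonneg (Nat.cast_nonneg _) 2
  rw [← sub_nonneg]
  convert mul_nonneg hn2 hpair using 1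
  rw [hc]
  field_simp

end IsOneWalkRegular

end OneWalkRegular

theorem one_walk_regular_ratio_bound_A_general {V 𝕜 : Type*} [Fintype V] [DecidableEq V]
    [RCLike 𝕜] {G : SimpleGraph V} [DecidableRel G.Adj] {M N : Matrix V V 𝕜}
    (hG : IsOneWalkRegular G 𝕜) (hM : M.PosSemidef) (hN : N.PosSemidef) (hM0 : M ≠ 0) (hN0 : N ≠ 0)
    (hMA : M ⊙ G.adjMatrix 𝕜 = 0) (hNA : N ⊙ (allOnes V 𝕜 - 1 - G.adjMatrix 𝕜) = 0) :
    (allOnes V 𝕜 * M).trace * (allOnes V 𝕜 * N).trace / (M.trace * N.trace) ≤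
      Fintype.card V :=
  (div_le_iff₀ (mul_pos (trace_pos_of_posSemidef_of_ne_zero hM hM0)
    (trace_pos_of_posSemidef_of_ne_zero hN hN0))).mpr
    (hG.trace_allOnes_mul_mul_trace_allOnes_mul_le hM hN hMA hNA)

/-- Theorem for 1-walk regular graphs (condition (A)): if G is 1-walk regular with
adjacency matrix A, and M, N are nonzero PSD matrices with M ∘ A = 0 and
N ∘ (J - I - A) = 0, then n ≥ (tr JM)(tr JN)/((tr M)(tr N)). -/
theorem one_walk_regular_ratio_bound_A {n : ℕ}
    (G : SimpleGraph (Fin n)) [DecidableRel G.Adj]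
    (hwalk : ∀ k : ℕ, 0 < k → ∃ a b : ℂ,
      Matrix.hadamard ((G.adjMatrix ℂ) ^ k) 1 = a • (1 : Matrix (Fin n) (Fin n) ℂ) ∧
      Matrix.hadamard ((G.adjMatrix ℂ) ^ k) (G.adjMatrix ℂ) = b • G.adjMatrix ℂ)
    (M N : Matrix (Fin n) (Fin n) ℂ)
    (hM : M.PosSemidef) (hN : N.PosSemidef)
    (hMnz : M ≠ 0) (hNnz : N ≠ 0)
    (hMA : Matrix.hadamard M (G.adjMatrix ℂ) = 0)
    (hNA : Matrix.hadamard N ((Matrix.of fun _ _ => (1 : ℂ)) - 1 - G.adjMatrix ℂ) = 0) :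
    Matrix.trace ((Matrix.of fun _ _ => (1 : ℂ)) * M) *
        Matrix.trace ((Matrix.of fun _ _ => (1 : ℂ)) * N) /
      (Matrix.trace M * Matrix.trace N) ≤ (n : ℂ) := by
  simpa only [Fintype.card_fin] using
    one_walk_regular_ratio_bound_A_general hwalk hM hN hMnz hNnz hMA hNA
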